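/- Let X be a finite set, π a probability measure on X, ψ : X → 2^X a variable valuation with π(⟦ψ⟧) > 0. For A ⊆ X define Bel^π_ψ(A) = π({x ∈ X : ψ(x) ⊆ A} | ⟦ψ⟧). Then for all disjoint A, B ⊆ X, Bel^π_ψ(A ∪ B) ≥ Bel^π_ψ(A) + Bel^π_ψ(B). -/

import Mathlib

/-- The truth set of a variable valuation `p : X → Set X`. -/
def truthSet {X : Type*} (p : X → Set X) : Set X := {x | x ∈ p x}

/-- The probability of an event `A ⊆ X` under a weight function `π` on a finite set `X`. -/
noncomputable def pr {X : Type*} [Fintype X] (π : X → ℝ) (A : Set X) : ℝ :=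
  ∑ x, A.indicator π x

/-- Conditional probability `π(B | C) = π(B ∩ C) / π(C)`. -/
noncomputable def condProb {X : Type*} [Fintype X] (π : X → ℝ) (B C : Set X) : ℝ :=
  pr π (B ∩ C) / pr π C

/-- Evidentially supported belief: `Bel^π_ψ(A) = π({x : ψ(x) ⊆ A} | ⟦ψ⟧)`. -/
noncomputable def bel {X : Type*} [Fintype X] (π : X → ℝ) (ψ : X → Set X) (A : Set X) : ℝ :=
  condProb π {x | ψ x ⊆ A} (truthSet ψ)

/-- The mass function `m^π_ψ(A) = π(ψ⁻¹(A) | ⟦ψ⟧)`. -/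
noncomputable def mass {X : Type*} [Fintype X] (π : X → ℝ) (ψ : X → Set X) (A : Set X) : ℝ :=
  condProb π {x | ψ x = A} (truthSet ψ)

section

variable {X : Type*} [Fintype X]

theorem pr_empty (π : X → ℝ) : pr π ∅ = 0 := by
  simp [pr]

theorem pr_mono {π : X → ℝ} (hnn : ∀ x, 0 ≤ π x) {A B : Set X} (hAB : A ⊆ B) :
    pr π A ≤ pr π B :=
  Finset.sum_le_sum fun x _ => Set.indicator_le_indicator_of_subset hAB hnn x

theorem pr_union_add_inter (π : X → ℝ) (A B : Set X) :
    pr π (A ∪ B) + pr π (A ∩ B) = pr π A + pr π B := by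
  simp only [pr, ← Finset.sum_add_distrib, Set.indicator_union_add_inter_apply]

theorem condProb_mono {π : X → ℝ} (hnn : ∀ x, 0 ≤ π x) {A B C : Set X} (hC : 0 < pr π C)
    (hAB : A ⊆ B) : condProb π A C ≤ condProb π B C :=
  (div_le_div_iff_of_pos_right hC).2 (pr_mono hnn (Set.inter_subset_inter_left C hAB))

theorem condProb_union_add_inter (π : X → ℝ) (A B C : Set X) :
    condProb π (A ∪ B) C + condProb π (A ∩ B) C = condProb π A C + condProb π B C := by
  rw [condProb, condProb, condProb, condProb, ← add_div, ← add_div, Set.union_inter_distrib_right,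
    Set.inter_inter_distrib_right, pr_union_add_inter]

theorem bel_empty (π : X → ℝ) (ψ : X → Set X) : bel π ψ ∅ = 0 := by
  have hempty : {x | ψ x ⊆ ∅} ∩ truthSet ψ = ∅ :=
    Set.eq_empty_of_forall_notMem fun _ ⟨hsub, hmem⟩ => hsub hmem
  rw [bel, condProb, hempty, pr_empty, zero_div]

/-- Known as 2-monotonicity (convexity) of the capacity `bel π ψ`. It is an inequality because
evidence `ψ x` may entail `A ∪ B` while entailing neither `A` nor `B`. -/
theorem bel_superadditive_general {π : X → ℝ} (hnn : ∀ x, 0 ≤ π x) {ψ : X → Set X}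
    (hψ : 0 < pr π (truthSet ψ)) (A B : Set X) :
    bel π ψ A + bel π ψ B ≤ bel π ψ (A ∪ B) + bel π ψ (A ∩ B) := by
  have hunion : {x | ψ x ⊆ A} ∪ {x | ψ x ⊆ B} ⊆ {x | ψ x ⊆ A ∪ B} :=
    Set.union_subset (fun _ h => h.trans Set.subset_union_left)
      (fun _ h => h.trans Set.subset_union_right)
  have hinter : {x | ψ x ⊆ A} ∩ {x | ψ x ⊆ B} = {x | ψ x ⊆ A ∩ B} :=
    Set.ext fun _ => Set.subset_inter_iff.symm
  calc
    bel π ψ A + bel π ψ B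
      = condProb π ({x | ψ x ⊆ A} ∪ {x | ψ x ⊆ B}) (truthSet ψ)
          + condProb π ({x | ψ x ⊆ A} ∩ {x | ψ x ⊆ B}) (truthSet ψ) :=
        (condProb_union_add_inter π _ _ _).symm
    _ = condProb π ({x | ψ x ⊆ A} ∪ {x | ψ x ⊆ B}) (truthSet ψ) + bel π ψ (A ∩ B) := by
        rw [hinter, ← bel]
    _ ≤ bel π ψ (A ∪ B) + bel π ψ (A ∩ B) := by
        gcongr
        exact condProb_mono hnn hψ hunion

end

theorem bel_superadditive {X : Type*} [Fintype X] (π : X → ℝ)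
    (hnn : ∀ x, 0 ≤ π x) (hsum : ∑ x, π x = 1)
    (ψ : X → Set X) (hψ : 0 < pr π (truthSet ψ))
    (A B : Set X) (hAB : Disjoint A B) :
    bel π ψ A + bel π ψ B ≤ bel π ψ (A ∪ B) := by
  simpa [hAB.inter_eq, bel_empty] using bel_superadditive_general hnn hψ A B
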